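/- arXiv:1011.5971 — 2 statements merged into one kernel-verified Lean document; each statement's English description precedes it below -/
import Mathlib

section
/- Suppose the letter x_n occurs at some earlier position in the directive word, so that \bar{h_{n-1}} is a suffix of u_n. Then the word v_{n-1} := u_n (\bar{h_{n-1}})^{-1} (obtained from u_n by deleting the suffix \bar{h_{n-1}}) is a palindrome, and v_{n-1} is both a prefix and a suffix of u_{n-1}. -/
variable {A : Type*} [DecidableEq A]

/-- `psiW a` is the morphism with `ψ_a(a) = a` and `ψ_a(x) = ax` for `x ≠ a`. -/
def psiW (a : A) (w : List A) : List A :=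
  w.flatMap (fun b => if b = a then [a] else [a, b])

/-- `muW x n = ψ_{x 1} ∘ ⋯ ∘ ψ_{x n}`. -/
def muW (x : ℕ → A) : ℕ → List A → List A
  | 0 => id
  | n + 1 => fun w => muW x n (psiW (x (n + 1)) w)

/-- `hW x n = μ_n (x_{n+1})`. -/
def hW (x : ℕ → A) (n : ℕ) : List A := muW x n [x (n + 1)]

/-- `p` is the palindromic right-closure of `w`: the shortest palindrome having `w`
as a prefix. -/
def IsPalClosure (w p : List A) : Prop :=
  w <+: p ∧ p.reverse = p ∧
    ∀ q : List A, w <+: q → q.reverse = q → p.length ≤ q.length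

/-- The finite word `w` is a prefix of the infinite word `s`. -/
def PrefInf (w : List A) (s : ℕ → A) : Prop :=
  ∀ i : ℕ, ∀ h : i < w.length, w[i] = s i

/-- Number of occurrences (positions) of `w` as a factor of `v`. -/
def occ (w v : List A) : ℕ :=
  (List.range (v.length + 1)).countP
    (fun i => decide (i + w.length ≤ v.length ∧ (v.drop i).take w.length = w))

/-- `cat z k = z 1 ++ z 2 ++ ⋯ ++ z k`. -/
def cat (z : ℕ → List A) (k : ℕ) : List A := ((List.range' 1 k).map z).flatten

/-- `z` is the Ziv-Lempel factorization of the infinite word `s`: each `z m` is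
the shortest prefix of `z m · z (m+1) ⋯` occurring only once in `z 1 ⋯ z m`. -/
def IsZFact (s : ℕ → A) (z : ℕ → List A) : Prop :=
  ∀ m : ℕ, 1 ≤ m → z m ≠ [] ∧ PrefInf (cat z m) s ∧
    occ (z m) (cat z m) = 1 ∧
    ∀ p : List A, p <+: z m → p ≠ z m → 2 ≤ occ p (cat z m)

/-- `c` is the Crochemore factorization of the infinite word `s`: each `c m` is
either a fresh letter, or the longest prefix of `c m · c (m+1) ⋯` occurring
twice in `c 1 ⋯ c m`. -/
def IsCFact (s : ℕ → A) (c : ℕ → List A) : Prop :=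
  ∀ m : ℕ, 1 ≤ m → c m ≠ [] ∧ PrefInf (cat c m) s ∧
    ((∃ a : A, c m = [a] ∧ a ∉ cat c (m - 1)) ∨
      (2 ≤ occ (c m) (cat c m) ∧
        occ (c m ++ [s (cat c m).length]) (cat c m ++ [s (cat c m).length]) = 1))

/-!
The words `μ_m(a)` record longest palindromic suffixes: if `s` is the longest palindromic suffix of
`u_{m+1} a` and `u_{m+1} a = p s`, then `μ_m(a) = p a`. This goes by induction on `m`. A palindromic
right-closure is obtained by reflecting `p` across `s`, which for `a = x_{m+1}` gives
`u_{m+2} = p s \bar{p} = h_m u_{m+1}`. A palindromic suffix of `u_{m+2} b` of length at least two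
has the form `b r b` with `r b` a prefix of `u_{m+2}`, and by minimality of the closure `r b` is
either `u_{m+1} x_{m+1}` or already a prefix of `u_{m+1}`.

If `a = x_n` occurs earlier in the directive word, then the longest palindromic suffix of `u_n a` is
`a v a` for some palindrome `v`, so that `u_n = h_{n-1} v`, and reversing gives
`u_n = v \bar{h_{n-1}}`. Here `v a` is a prefix of `u_n`, so the same minimality applies to it.
-/

section Palindromes

variable {α : Type*} {a b : α} {p r s t w z : List α}

/-- `s` is the longest palindromic suffix of `w`; palindromes are expressed by `s.reverse = s`, as
in `IsPalClosure`. -/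
structure IsLongestPalSuffix (w s : List α) : Prop where
  suffix : s <:+ w
  reverse_eq : s.reverse = s
  length_le : ∀ t, t <:+ w → t.reverse = t → t.length ≤ s.length

theorem suffix_of_prefix_of_reverse_eq (hw : w.reverse = w) (hz : z.reverse = z) (h : w <+: z) :
    w <:+ z := by
  rwa [← hw, ← hz, List.reverse_suffix]

theorem exists_eq_reverse_append_of_reverse_append_eq (h : (w ++ t).reverse = w ++ t)
    (hle : t.length ≤ w.length) : ∃ r, r.reverse = r ∧ w = t.reverse ++ r := by
  have ht : t.reverse <+: w := by
    refine List.prefix_of_prefix_length_le (l₃ := w ++ t) ?_ (List.prefix_append w t) (by simpa)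
    rw [← h, List.reverse_append]
    exact List.prefix_append _ _
  obtain ⟨r, rfl⟩ := ht
  exact ⟨r, by simpa using h, rfl⟩

theorem cons_concat_suffix_concat_iff (hr : r.reverse = r) (hw : w.reverse = w) :
    b :: (r ++ [b]) <:+ w ++ [a] ↔ b = a ∧ r ++ [b] <+: w := by
  rw [← List.reverse_prefix]
  simp [hr, hw]

theorem length_le_one_or_eq_cons_concat (hw : w.reverse = w) (ht : t.reverse = t)
    (h : t <:+ w ++ [a]) :
    t.length ≤ 1 ∨ ∃ r, r.reverse = r ∧ t = a :: (r ++ [a]) ∧ r ++ [a] <+: w := by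
  cases List.Palindrome.of_reverse_eq ht with
  | nil => simp
  | singleton => simp
  | cons_concat b hr =>
    obtain ⟨rfl, hrb⟩ := (cons_concat_suffix_concat_iff hr.reverse_eq hw).1 h
    exact .inr ⟨_, hr.reverse_eq, rfl, hrb⟩

theorem isLongestPalSuffix_singleton (a : α) : IsLongestPalSuffix [a] [a] where
  suffix := List.suffix_rfl
  reverse_eq := List.reverse_singleton
  length_le _ ht _ := ht.length_le

theorem isLongestPalSuffix_concat_iff (hw : w.reverse = w) :
    IsLongestPalSuffix (w ++ [a]) s ↔ s <:+ w ++ [a] ∧ s.reverse = s ∧ 1 ≤ s.length ∧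
      ∀ r, r.reverse = r → r ++ [a] <+: w → r.length + 2 ≤ s.length := by
  refine ⟨fun hs => ⟨hs.suffix, hs.reverse_eq, ?_, fun r hr hra => ?_⟩, ?_⟩
  · exact hs.length_le [a] (List.suffix_append w [a]) List.reverse_singleton
  · have := hs.length_le _ ((cons_concat_suffix_concat_iff hr hw).2 ⟨rfl, hra⟩) (by simp [hr])
    simpa [Nat.succ_le_iff] using this
  · rintro ⟨hsuff, hpal, hpos, hlen⟩
    refine ⟨hsuff, hpal, fun t ht htpal => ?_⟩
    obtain hle | ⟨r, hr, rfl, hra⟩ := length_le_one_or_eq_cons_concat hw htpal ht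
    · exact hle.trans hpos
    · simpa [Nat.succ_le_iff] using hlen r hr hra

namespace IsPalClosure

theorem eq_append_reverse (hz : IsPalClosure (p ++ s) z) (hs : IsLongestPalSuffix (p ++ s) s) :
    z = p ++ s ++ p.reverse := by
  obtain ⟨⟨t, rfl⟩, hpal, hmin⟩ := hz
  have hle : t.length ≤ p.length := by
    simpa using hmin (p ++ s ++ p.reverse) (List.prefix_append _ _) (by simp [hs.reverse_eq])
  obtain ⟨r, hr, hw⟩ := exists_eq_reverse_append_of_reverse_append_eq hpal (by simp; omega)
  have hrs : r.length ≤ s.length := hs.length_le r ⟨_, hw.symm⟩ hr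
  have hpt : p = t.reverse := by
    have hlen := congrArg List.length hw
    simp only [List.length_append, List.length_reverse] at hlen
    exact List.append_inj_left hw (by rw [List.length_reverse]; omega)
  rw [hpt, List.reverse_reverse]

theorem eq_concat_append (hz : IsPalClosure (w ++ [a]) z) (hw : w.reverse = w)
    (hs : IsLongestPalSuffix (w ++ [a]) s) (hps : w ++ [a] = p ++ s) : z = p ++ [a] ++ w := by
  have hzp : z = w ++ [a] ++ p.reverse := by
    rw [hps] at hz hs ⊢
    exact hz.eq_append_reverse hs
  rw [← hz.2.1, hzp]
  simp [hw]

theorem concat_prefix_or_eq (hz : IsPalClosure (w ++ [a]) z) (hr : r.reverse = r)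
    (hrb : r ++ [b] <+: z) : r ++ [b] <+: w ∨ r = w ∧ b = a := by
  have hrz : r.length < z.length := by simpa using hrb.length_le
  have hrw : r.length ≤ w.length := by
    by_contra! hlt
    have hwr : w ++ [a] <+: r := List.prefix_of_prefix_length_le hz.1
      ((List.prefix_append r [b]).trans hrb) (by simpa)
    exact hrz.not_ge (hz.2.2 r hwr hr)
  have hpre : r ++ [b] <+: w ++ [a] := List.prefix_of_prefix_length_le hrb hz.1 (by simpa)
  simpa [List.prefix_concat_iff, or_comm] using hpre

theorem isLongestPalSuffix_concat_self (hz : IsPalClosure (w ++ [a]) z) (hw : w.reverse = w) :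
    IsLongestPalSuffix (z ++ [a]) (a :: (w ++ [a])) := by
  refine (isLongestPalSuffix_concat_iff hz.2.1).2
    ⟨(cons_concat_suffix_concat_iff hw hz.2.1).2 ⟨rfl, hz.1⟩, by simp [hw], by simp, ?_⟩
  intro r hr hra
  obtain hpre | ⟨rfl, -⟩ := hz.concat_prefix_or_eq hr hra
  · simpa using (List.prefix_append r [a]).length_le.trans hpre.length_le
  · simp

theorem isLongestPalSuffix_concat_of_ne (hz : IsPalClosure (w ++ [a]) z) (hw : w.reverse = w)
    (hb : b ≠ a) (hs : IsLongestPalSuffix (w ++ [b]) s) : IsLongestPalSuffix (z ++ [b]) s := by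
  obtain ⟨hsuff, hpal, hpos, hlen⟩ := (isLongestPalSuffix_concat_iff hw).1 hs
  have hwz : w <:+ z :=
    suffix_of_prefix_of_reverse_eq hw hz.2.1 ((List.prefix_append w [a]).trans hz.1)
  refine (isLongestPalSuffix_concat_iff hz.2.1).2
    ⟨hsuff.trans (List.suffix_append_self_iff.2 hwz), hpal, hpos, fun r hr hrb => ?_⟩
  exact hlen r hr ((hz.concat_prefix_or_eq hr hrb).resolve_right fun h => hb h.2)

end IsPalClosure

end Palindromes

theorem psiW_append (a : A) (w w' : List A) : psiW a (w ++ w') = psiW a w ++ psiW a w' :=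
  List.flatMap_append

theorem muW_append (x : ℕ → A) (m : ℕ) (w w' : List A) :
    muW x m (w ++ w') = muW x m w ++ muW x m w' := by
  induction m generalizing w w' with
  | zero => rfl
  | succ m ih => simp only [muW, psiW_append, ih]

theorem muW_succ_self (x : ℕ → A) (m : ℕ) : muW x (m + 1) [x (m + 1)] = hW x m := by
  simp [muW, psiW, hW]

theorem muW_succ_of_ne (x : ℕ → A) (m : ℕ) {a : A} (ha : a ≠ x (m + 1)) :
    muW x (m + 1) [a] = hW x m ++ muW x m [a] := by
  have hpsi : psiW (x (m + 1)) [a] = [x (m + 1)] ++ [a] := by simp [psiW, ha]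
  simp only [muW, hpsi, muW_append, hW]

/-- `u 1, u 2, …` is the sequence of palindromic prefixes of the standard episturmian word with
directive word `x 1, x 2, …`; the values `x 0` and `u 0` are unconstrained. -/
structure IsPalPrefixSeq {α : Type*} (x : ℕ → α) (u : ℕ → List α) : Prop where
  one : u 1 = []
  isPalClosure : ∀ n, 1 ≤ n → IsPalClosure (u n ++ [x n]) (u (n + 1))

namespace IsPalPrefixSeq

section Prefixes

variable {α : Type*} {x : ℕ → α} {u : ℕ → List α}

theorem reverse_eq (hu : IsPalPrefixSeq x u) (m : ℕ) : (u (m + 1)).reverse = u (m + 1) := by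
  cases m with
  | zero => simp [hu.one]
  | succ m => exact (hu.isPalClosure (m + 1) (by omega)).2.1

theorem concat_prefix_of_lt (hu : IsPalPrefixSeq x u) {i n : ℕ} (hi : 1 ≤ i) (hin : i < n) :
    u i ++ [x i] <+: u n := by
  induction n, hin using Nat.le_induction with
  | base => exact (hu.isPalClosure i hi).1
  | succ n hin ih =>
    exact ih.trans ((List.prefix_append _ _).trans (hu.isPalClosure n (by omega)).1)

end Prefixes

variable {x : ℕ → A} {u : ℕ → List A}

theorem exists_muW_eq_concat (hu : IsPalPrefixSeq x u) (m : ℕ) (a : A) :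
    ∃ p s, u (m + 1) ++ [a] = p ++ s ∧ IsLongestPalSuffix (u (m + 1) ++ [a]) s ∧
      muW x m [a] = p ++ [a] := by
  induction m generalizing a with
  | zero => exact ⟨[], [a], by simp [hu.one], by simp [hu.one, isLongestPalSuffix_singleton], rfl⟩
  | succ m ih =>
    have hcl := hu.isPalClosure (m + 1) (by omega)
    have hpal := hu.reverse_eq m
    obtain ⟨p, s, hps, hs, hmu⟩ := ih (x (m + 1))
    have hu_succ : u (m + 2) = p ++ [x (m + 1)] ++ u (m + 1) := hcl.eq_concat_append hpal hs hps
    by_cases ha : a = x (m + 1)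
    · subst ha
      refine ⟨p, _, ?_, hcl.isLongestPalSuffix_concat_self hpal, (muW_succ_self x m).trans hmu⟩
      simp [hu_succ]
    · obtain ⟨q, t, hqt, ht, hmu_a⟩ := ih a
      refine ⟨p ++ [x (m + 1)] ++ q, t, ?_, hcl.isLongestPalSuffix_concat_of_ne hpal ha ht, ?_⟩
      · rw [hu_succ, List.append_assoc, hqt, List.append_assoc _ q t]
      · rw [muW_succ_of_ne x m ha, hW, hmu, hmu_a, List.append_assoc _ q]

theorem exists_eq_hW_append (hu : IsPalPrefixSeq x u) {m i : ℕ} (hi : 1 ≤ i) (him : i ≤ m)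
    (hx : x i = x (m + 1)) :
    ∃ v, v.reverse = v ∧ v ++ [x (m + 1)] <+: u (m + 1) ∧ u (m + 1) = hW x m ++ v := by
  obtain ⟨p, s, hps, hs, hmu⟩ := hu.exists_muW_eq_concat m (x (m + 1))
  have hpal := hu.reverse_eq m
  have hs_len : (u i).length + 2 ≤ s.length := by
    obtain ⟨j, rfl⟩ := Nat.exists_eq_add_of_le' hi
    exact ((isLongestPalSuffix_concat_iff hpal).1 hs).2.2.2 _ (hu.reverse_eq j)
      (hx ▸ hu.concat_prefix_of_lt hi (by omega))
  obtain hle | ⟨v, hv, rfl, hpre⟩ :=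
    length_le_one_or_eq_cons_concat hpal hs.reverse_eq hs.suffix
  · omega
  · refine ⟨v, hv, hpre, List.append_cancel_right (bs := [x (m + 1)]) ?_⟩
    rw [hps, hW, hmu]
    simp

end IsPalPrefixSeq

theorem v_palindrome (x : ℕ → A) (u : ℕ → List A) (hu1 : u 1 = [])
    (hu : ∀ n : ℕ, 1 ≤ n → IsPalClosure (u n ++ [x n]) (u (n + 1))) (n : ℕ) (hn : 1 ≤ n)
    (hocc : ∃ i : ℕ, 1 ≤ i ∧ i < n ∧ x i = x n) :
    ∃ v : List A, u n = v ++ (hW x (n - 1)).reverse ∧ v.reverse = v ∧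
      v <+: u (n - 1) ∧ v <:+ u (n - 1) := by
  have hu' : IsPalPrefixSeq x u := ⟨hu1, hu⟩
  obtain ⟨i, hi, hin, hx⟩ := hocc
  obtain ⟨m, rfl⟩ : ∃ m, n = m + 2 := Nat.exists_eq_add_of_le' (by omega)
  obtain ⟨v, hv, hvx, huv⟩ := hu'.exists_eq_hW_append hi (by omega) hx
  have hprefix : v <+: u (m + 1) := by
    obtain hpre | ⟨rfl, -⟩ := (hu (m + 1) (by omega)).concat_prefix_or_eq hv hvx
    · exact (List.prefix_append _ _).trans hpre
    · exact List.prefix_rfl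
  refine ⟨v, ?_, hv, hprefix, suffix_of_prefix_of_reverse_eq hv (hu'.reverse_eq m) hprefix⟩
  rw [← hu'.reverse_eq (m + 1), huv, List.reverse_append, hv]
  rfl
end

section
/- Let s be a standard episturmian word over alphabet A whose directive word uses every letter of A, with run-length decomposition y_1^{d_1}y_2^{d_2}⋯. Let k_0 = |A| and m = 1 if d_1 = 1, m = 0 otherwise. Then for all sufficiently large k, the Ziv-Lempel and Crochemore factors are related by z_k = y_{k-1}^{-1} c_{k+k_0-1-m} y_k. -/
variable {A : Type*} [DecidableEq A]

/-!
Let `u 0, u 1, …` be the palindromic prefixes of `s`, and let the `k`-th run of the directive word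
start at `g k`. As `u (n + 1)` has period `|u (n + 1)| - |u n|`, its suffixes that start late enough
already occur further left. If the directive word changes letter at `n + 1`, the letter of `s` after
`u (n + 1)` breaks that period, and counting this letter in windows of one period shows that the
prolonged suffixes do not occur further left. Hence Crochemore factors end exactly with the
palindromes `u (g k)` and Ziv-Lempel factors one letter later, except that each new letter of the
alphabet costs the Crochemore factorization one more factor. Once all letters have appeared, a
Ziv-Lempel factor is thus a Crochemore factor shifted by one letter, and the number of letters
accounts for the difference of the indices.
-/

section Factors

variable {α : Type*} {s : ℕ → α}

/-- The factor `s N ⋯ s (N + n - 1)` of the infinite word `s`. -/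
def factor (s : ℕ → α) (N n : ℕ) : List α := (List.range' N n).map s

/-- The factor `s N ⋯ s (M - 1)` also occurs at a position before `N`, where the two occurrences
may overlap. An empty factor (`M ≤ N`) occurs earlier exactly when `0 < N`. -/
def OccursEarlier (s : ℕ → α) (N M : ℕ) : Prop :=
  ∃ i < N, ∀ t, N + t < M → s (i + t) = s (N + t)

theorem OccursEarlier.mono {N N' M M' : ℕ} (h : OccursEarlier s N M) (hN : N ≤ N') (hM : M' ≤ M) :
    OccursEarlier s N' M' := by
  obtain ⟨i, hi, heq⟩ := h
  obtain ⟨r, rfl⟩ := Nat.exists_eq_add_of_le hN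
  refine ⟨i + r, by omega, fun t ht => ?_⟩
  simpa only [Nat.add_assoc] using heq (r + t) (by omega)

theorem length_factor (s : ℕ → α) (N n : ℕ) : (factor s N n).length = n := by
  simp only [factor, List.length_map, List.length_range']

theorem getElem_factor {N n t : ℕ} (ht : t < (factor s N n).length) :
    (factor s N n)[t] = s (N + t) := by
  simp [factor]

theorem factor_add (s : ℕ → α) (N m n : ℕ) :
    factor s N (m + n) = factor s N m ++ factor s (N + m) n := by
  simp [factor, ← List.map_append]

theorem factor_one (s : ℕ → α) (N : ℕ) : factor s N 1 = [s N] := rfl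

theorem factor_eq_factor_iff {i j n : ℕ} :
    factor s i n = factor s j n ↔ ∀ t < n, s (i + t) = s (j + t) := by
  simp [factor, List.range'_eq_map_range]

theorem reverse_factor_eq_self {N n : ℕ} (h : ∀ t < n, s (N + (n - 1 - t)) = s (N + t)) :
    (factor s N n).reverse = factor s N n := by
  refine List.ext_getElem (by simp) fun t _ ht => ?_
  rw [length_factor] at ht
  simp only [List.getElem_reverse, getElem_factor, length_factor, h t ht]

theorem factor_zero_eq_iff {v : List α} : factor s 0 v.length = v ↔ PrefInf v s := by
  refine ⟨fun h i hi => ?_, fun h => List.ext_getElem (by simp [length_factor]) fun i _ hi => ?_⟩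
  · have hget := getElem_factor (s := s) (N := 0) (n := v.length) (t := i) (by rwa [h])
    simpa only [h, Nat.zero_add] using hget
  · rw [getElem_factor, Nat.zero_add, h i hi]

theorem PrefInf.of_append {p w : List α} (h : PrefInf (p ++ w) s) : PrefInf p s := fun i hi => by
  rw [← h i (by rw [List.length_append]; omega), List.getElem_append_left hi]

theorem PrefInf.append_singleton {v : List α} (h : PrefInf v s) :
    PrefInf (v ++ [s v.length]) s := by
  rw [← factor_zero_eq_iff] at h ⊢
  rw [List.length_append, List.length_singleton, factor_add, h, Nat.zero_add, factor_one]

theorem PrefInf.suffix_eq_factor {p w : List α} (h : PrefInf (p ++ w) s) :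
    w = factor s p.length w.length := by
  have hfactor := factor_zero_eq_iff.2 h
  rw [List.length_append, factor_add, factor_zero_eq_iff.2 h.of_append, Nat.zero_add] at hfactor
  exact (List.append_cancel_left hfactor).symm

theorem PrefInf.take_drop_eq_factor {v : List α} (h : PrefInf v s) {i n : ℕ}
    (hi : i + n ≤ v.length) : (v.drop i).take n = factor s i n := by
  obtain ⟨r, hr⟩ := Nat.exists_eq_add_of_le hi
  rw [← factor_zero_eq_iff.2 h, hr]
  simp [factor, ← List.map_drop, ← List.map_take, Nat.add_assoc]

end Factors

section Occurrences

variable {α : Type*} [DecidableEq α] {s : ℕ → α}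

theorem occ_factor_eq_card {v : List α} (hv : PrefInf v s) (N n : ℕ) :
    occ (factor s N n) v =
      ((Finset.range (v.length + 1)).filter
        fun i => i + n ≤ v.length ∧ ∀ t < n, s (i + t) = s (N + t)).card := by
  rw [occ, length_factor, List.countP_eq_length_filter]
  change Finset.card (Finset.filter _ (Finset.range (v.length + 1))) = _
  congr 1
  refine Finset.filter_congr fun i _ => and_congr_right fun hi => ?_
  rw [hv.take_drop_eq_factor hi, factor_eq_factor_iff]

theorem one_le_occ_factor {v : List α} (hv : PrefInf v s) {N n : ℕ} (hN : N + n ≤ v.length) :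
    1 ≤ occ (factor s N n) v := by
  rw [occ_factor_eq_card hv]
  exact Finset.card_pos.2
    ⟨N, Finset.mem_filter.2 ⟨Finset.mem_range.2 (by omega), hN, fun _ _ => rfl⟩⟩

theorem two_le_occ_factor_iff {v : List α} (hv : PrefInf v s) {N n : ℕ} (hN : N + n ≤ v.length) :
    2 ≤ occ (factor s N n) v ↔
      ∃ i ≠ N, i + n ≤ v.length ∧ ∀ t < n, s (i + t) = s (N + t) := by
  rw [occ_factor_eq_card hv]
  constructor
  · intro h
    obtain ⟨i, hi, hne⟩ := Finset.exists_mem_ne h N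
    exact ⟨i, hne, (Finset.mem_filter.1 hi).2⟩
  · rintro ⟨i, hne, hi⟩
    exact Finset.one_lt_card.2
      ⟨i, Finset.mem_filter.2 ⟨Finset.mem_range.2 (by omega), hi⟩,
        N, Finset.mem_filter.2 ⟨Finset.mem_range.2 (by omega), hN, fun _ _ => rfl⟩, hne⟩

theorem two_le_occ_suffix_iff {p w : List α} (h : PrefInf (p ++ w) s) :
    2 ≤ occ w (p ++ w) ↔ OccursEarlier s p.length (p ++ w).length := by
  have hlen : p.length + w.length = (p ++ w).length := List.length_append.symm
  rw [congrArg (occ · (p ++ w)) h.suffix_eq_factor, two_le_occ_factor_iff h hlen.le]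
  constructor
  · rintro ⟨i, hne, hi, heq⟩
    exact ⟨i, by omega, fun t ht => heq t (by omega)⟩
  · rintro ⟨i, hi, heq⟩
    exact ⟨i, hi.ne, by omega, fun t ht => heq t (by omega)⟩

theorem occ_suffix_eq_one_iff {p w : List α} (h : PrefInf (p ++ w) s) :
    occ w (p ++ w) = 1 ↔ ¬ OccursEarlier s p.length (p ++ w).length := by
  have hpos : 1 ≤ occ w (p ++ w) := by
    rw [congrArg (occ · (p ++ w)) h.suffix_eq_factor]
    exact one_le_occ_factor h List.length_append.ge
  rw [← two_le_occ_suffix_iff h]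
  omega

end Occurrences

section Factorizations

variable {α : Type*} {s : ℕ → α}

theorem cat_succ (z : ℕ → List α) (k : ℕ) : cat z (k + 1) = cat z k ++ z (k + 1) := by
  simp [cat, List.range'_concat, Nat.add_comm]

theorem length_cat_lt_succ {z : ℕ → List α} {k : ℕ} (hz : z (k + 1) ≠ []) :
    (cat z k).length < (cat z (k + 1)).length := by
  rw [cat_succ, List.length_append]
  exact Nat.lt_add_of_pos_right (List.length_pos_iff.2 hz)

theorem eq_factor_of_length_cat {z : ℕ → List α} {k N n : ℕ}
    (hpre : PrefInf (cat z k ++ z (k + 1)) s) (hN : (cat z k).length = N)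
    (hn : (cat z (k + 1)).length = N + n) : z (k + 1) = factor s N n := by
  rw [cat_succ, List.length_append, hN] at hn
  rw [hpre.suffix_eq_factor, hN, Nat.add_left_cancel hn]

variable [DecidableEq α]

namespace IsZFact

variable {z : ℕ → List α}

theorem prefInf_append (hz : IsZFact s z) (k : ℕ) : PrefInf (cat z k ++ z (k + 1)) s :=
  cat_succ z k ▸ (hz (k + 1) k.succ_pos).2.1

theorem not_occursEarlier (hz : IsZFact s z) (k : ℕ) :
    ¬ OccursEarlier s (cat z k).length (cat z (k + 1)).length := by
  rw [cat_succ, ← occ_suffix_eq_one_iff (hz.prefInf_append k), ← cat_succ]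
  exact (hz (k + 1) k.succ_pos).2.2.1

-- The second alternative is needed because the definition also counts occurrences after the
-- first: all but the last letter of `a ⋯ a` recurs one position later.
theorem occursEarlier_or_eq (hz : IsZFact s z) (k : ℕ) :
    OccursEarlier s (cat z k).length ((cat z (k + 1)).length - 1) ∨
      ∀ j, (cat z k).length ≤ j → j < (cat z (k + 1)).length → s j = s (cat z k).length := by
  have hpre := hz.prefInf_append k
  have hlt := length_cat_lt_succ (hz (k + 1) k.succ_pos).1
  obtain ⟨n, hn⟩ := Nat.exists_eq_add_of_lt hlt
  have hz_eq : z (k + 1) = factor s (cat z k).length n ++ [s ((cat z k).length + n)] := by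
    rw [eq_factor_of_length_cat (n := n + 1) hpre rfl hn, factor_add, factor_one]
  have hocc : 2 ≤ occ (factor s (cat z k).length n) (cat z (k + 1)) :=
    (hz (k + 1) k.succ_pos).2.2.2 _ (hz_eq ▸ List.prefix_append _ _) (by simp [hz_eq])
  rw [two_le_occ_factor_iff (cat_succ z k ▸ hpre) (by omega)] at hocc
  obtain ⟨i, hne, hi, heq⟩ := hocc
  rcases hne.lt_or_gt with hlt | hgt
  · exact .inl ⟨i, hlt, fun t ht => heq t (by omega)⟩
  obtain rfl : i = (cat z k).length + 1 := by omega
  refine .inr fun j hj => ?_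
  induction j, hj using Nat.le_induction with
  | base => exact fun _ => rfl
  | succ j hj ih =>
    intro hj'
    rw [← ih (by omega)]
    obtain ⟨t, rfl⟩ := Nat.exists_eq_add_of_le hj
    simpa only [Nat.add_right_comm] using heq t (by omega)

theorem length_cat_succ (hz : IsZFact s z) {k M : ℕ} (h : OccursEarlier s (cat z k).length M)
    (h' : ¬ OccursEarlier s (cat z k).length (M + 1)) :
    (cat z (k + 1)).length = M + 1 ∨ M + 1 < (cat z (k + 1)).length ∧
      ∀ j, (cat z k).length ≤ j → j < (cat z (k + 1)).length → s j = s (cat z k).length := by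
  rcases lt_trichotomy (cat z (k + 1)).length (M + 1) with hlt | heq | hgt
  · exact absurd (h.mono le_rfl (by omega)) (hz.not_occursEarlier k)
  · exact .inl heq
  · exact .inr ⟨hgt, (hz.occursEarlier_or_eq k).resolve_left
      fun hearly => h' (hearly.mono le_rfl (by omega))⟩

end IsZFact

namespace IsCFact

variable {c : ℕ → List α}

theorem prefInf_append (hc : IsCFact s c) (k : ℕ) : PrefInf (cat c k ++ c (k + 1)) s :=
  cat_succ c k ▸ (hc (k + 1) k.succ_pos).2.1

theorem fresh_or_occursEarlier (hc : IsCFact s c) (k : ℕ) :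
    ((cat c (k + 1)).length = (cat c k).length + 1 ∧
        ∀ i < (cat c k).length, s i ≠ s (cat c k).length) ∨
      OccursEarlier s (cat c k).length (cat c (k + 1)).length ∧
        ¬ OccursEarlier s (cat c k).length ((cat c (k + 1)).length + 1) := by
  have hpre := hc.prefInf_append k
  have hsnoc := hpre.append_singleton
  rw [List.append_assoc] at hsnoc
  obtain ⟨-, -, ⟨a, ha, hfresh⟩ | ⟨htwice, honce⟩⟩ := hc (k + 1) k.succ_pos
  · left
    have hsa : s (cat c k).length = a := by
      simpa [ha, factor_one] using hpre.suffix_eq_factor.symm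
    refine ⟨by rw [cat_succ, ha, List.length_append, List.length_singleton], fun i hi heq => ?_⟩
    rw [Nat.add_sub_cancel] at hfresh
    have hmem : s i ∈ cat c k := hpre.of_append i hi ▸ List.getElem_mem hi
    exact hfresh (hsa ▸ heq ▸ hmem)
  · right
    rw [cat_succ] at htwice honce ⊢
    rw [List.append_assoc, occ_suffix_eq_one_iff hsnoc, ← List.append_assoc,
      List.length_append, List.length_singleton] at honce
    exact ⟨(two_le_occ_suffix_iff hpre).1 htwice, honce⟩

theorem length_cat_succ_of_fresh (hc : IsCFact s c) {k : ℕ}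
    (h : ∀ i < (cat c k).length, s i ≠ s (cat c k).length) :
    (cat c (k + 1)).length = (cat c k).length + 1 := by
  rcases hc.fresh_or_occursEarlier k with ⟨hlen, -⟩ | ⟨⟨i, hi, heq⟩, -⟩
  · exact hlen
  · exact absurd (heq 0 (length_cat_lt_succ (hc (k + 1) k.succ_pos).1)) (h i hi)

theorem length_cat_succ (hc : IsCFact s c) {k M : ℕ} (hM : (cat c k).length < M)
    (h : OccursEarlier s (cat c k).length M) (h' : ¬ OccursEarlier s (cat c k).length (M + 1)) :
    (cat c (k + 1)).length = M := by
  rcases hc.fresh_or_occursEarlier k with ⟨-, hfresh⟩ | ⟨hearly, hnot⟩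
  · obtain ⟨i, hi, heq⟩ := h
    exact absurd (heq 0 hM) (hfresh i hi)
  · refine le_antisymm (not_lt.1 fun hlt => h' (hearly.mono le_rfl hlt)) (not_lt.1 fun hlt => ?_)
    exact hnot (h.mono le_rfl hlt)

end IsCFact

end Factorizations

section Windows

variable {α : Type*} {s : ℕ → α}

theorem count_window_succ (P : ℕ → Prop) [DecidablePred P] (v p : ℕ) :
    Nat.count (fun t => P (v + 1 + t)) p + (if P v then 1 else 0) =
      Nat.count (fun t => P (v + t)) p + if P (v + p) then 1 else 0 := by
  rw [← Nat.count_succ (fun t => P (v + t)), Nat.count_succ' (fun t => P (v + t))]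
  simp only [Nat.add_assoc, Nat.add_comm 1, Nat.add_zero]

theorem count_window_eq_of_periodic {P : ℕ → Prop} [DecidablePred P] {ℓ p : ℕ}
    (hper : ∀ i < ℓ, (P (i + p) ↔ P i)) {v : ℕ} (hv : v ≤ ℓ) :
    Nat.count (fun t => P (v + t)) p = Nat.count P p := by
  induction v with
  | zero => simp only [Nat.zero_add]
  | succ v ih =>
    have hsucc := count_window_succ P v p
    simp only [hper v hv] at hsucc
    exact (Nat.add_right_cancel hsucc).trans (ih (Nat.le_of_succ_le hv))

-- The windows of length `p` starting in `[0, ℓ]` contain equally many letters `s (ℓ + p)`, and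
-- the window starting at `ℓ + 1` contains one more.
theorem not_occursEarlier_of_period_break {ℓ p : ℕ} (hper : ∀ i < ℓ, s (i + p) = s i)
    (hbreak : s ℓ ≠ s (ℓ + p)) : ¬ OccursEarlier s (ℓ + 1) (ℓ + p + 1) := by
  classical
  rintro ⟨i, hi, heq⟩
  let P : ℕ → Prop := fun j => s j = s (ℓ + p)
  have hperP : ∀ i < ℓ, (P (i + p) ↔ P i) := fun i hi => by simp only [P, hper i hi]
  have hlast := count_window_succ P ℓ p
  have hoccurrence : Nat.count (fun t => P (ℓ + 1 + t)) p = Nat.count (fun t => P (i + t)) p := by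
    simp only [Nat.count_eq_card_filter_range]
    congr 1
    refine Finset.filter_congr fun t ht => ?_
    rw [Finset.mem_range] at ht
    simp only [P, heq t (by omega)]
  rw [hoccurrence, count_window_eq_of_periodic hperP (Nat.lt_succ_iff.1 hi),
    count_window_eq_of_periodic hperP le_rfl, if_neg hbreak, if_pos rfl] at hlast
  omega

end Windows

section Episturmian

variable {α : Type*} {s : ℕ → α}

/-- `s` is the standard episturmian word with directive word `x 0, x 1, …`, and `u 0, u 1, …` are
its palindromic prefixes in increasing order. All indices start at `0`. -/
structure IsStandardEpisturmian (x : ℕ → α) (u : ℕ → List α) (s : ℕ → α) : Prop where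
  zero : u 0 = []
  isPalClosure (n : ℕ) : IsPalClosure (u n ++ [x n]) (u (n + 1))
  prefInf (n : ℕ) : PrefInf (u n) s

theorem IsPalClosure.length_le_of_append {p m v : List α} (h : IsPalClosure (p ++ m) v)
    (hm : m.reverse = m) : v.length ≤ 2 * p.length + m.length := by
  have hle := h.2.2 (p ++ m ++ p.reverse) (List.prefix_append _ _) (by simp [hm])
  simp only [List.length_append, List.length_reverse] at hle
  omega

namespace IsStandardEpisturmian

variable {x : ℕ → α} {u : ℕ → List α}

theorem length_lt_succ (h : IsStandardEpisturmian x u s) (n : ℕ) :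
    (u n).length < (u (n + 1)).length := by
  simpa using (h.isPalClosure n).1.length_le

theorem strictMono_length (h : IsStandardEpisturmian x u s) :
    StrictMono fun n => (u n).length :=
  strictMono_nat_of_lt_succ h.length_lt_succ

theorem length_zero (h : IsStandardEpisturmian x u s) : (u 0).length = 0 := by
  rw [h.zero, List.length_nil]

theorem reverse_eq (h : IsStandardEpisturmian x u s) (n : ℕ) : (u n).reverse = u n := by
  cases n with
  | zero => rw [h.zero, List.reverse_nil]
  | succ n => exact (h.isPalClosure n).2.1

theorem apply_length (h : IsStandardEpisturmian x u s) (n : ℕ) : s (u n).length = x n := by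
  obtain ⟨r, hr⟩ := (h.isPalClosure n).1
  have hpre : PrefInf (u n ++ [x n]) s := PrefInf.of_append (hr ▸ h.prefInf (n + 1))
  simpa using (hpre (u n).length (by simp)).symm

theorem append_singleton_eq_factor (h : IsStandardEpisturmian x u s) (n : ℕ) :
    u n ++ [x n] = factor s 0 ((u n).length + 1) := by
  rw [factor_add, factor_zero_eq_iff.2 (h.prefInf n), factor_one, Nat.zero_add, h.apply_length]

theorem apply_reflect (h : IsStandardEpisturmian x u s) {n i : ℕ} (hi : i < (u n).length) :
    s ((u n).length - 1 - i) = s i := by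
  rw [← h.prefInf n i hi, ← h.prefInf n _ (by omega),
    ← List.getElem_reverse (by rwa [List.length_reverse])]
  simp only [h.reverse_eq]

theorem apply_add_period (h : IsStandardEpisturmian x u s) {n i : ℕ} (hi : i < (u n).length) :
    s (i + ((u (n + 1)).length - (u n).length)) = s i := by
  have hlt := h.length_lt_succ n
  rw [← h.apply_reflect hi, ← h.apply_reflect (n := n + 1) (by omega)]
  congr 1
  omega

theorem length_succ_le_of_reflect (h : IsStandardEpisturmian x u s) {n q : ℕ}
    (hq : q ≤ (u n).length)
    (hpal : ∀ i, q ≤ i → i ≤ (u n).length → s ((u n).length + q - i) = s i) :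
    (u (n + 1)).length ≤ (u n).length + 1 + q := by
  obtain ⟨r, hr⟩ := Nat.exists_eq_add_of_le hq
  have hsplit : u n ++ [x n] = factor s 0 q ++ factor s q (r + 1) := by
    rw [h.append_singleton_eq_factor, hr, Nat.add_assoc, factor_add, Nat.zero_add]
  have hreverse : (factor s q (r + 1)).reverse = factor s q (r + 1) := by
    refine reverse_factor_eq_self fun t ht => ?_
    rw [← hpal (q + t) (by omega) (by omega)]
    congr 1
    omega
  have hle := (hsplit ▸ h.isPalClosure n).length_le_of_append hreverse
  rw [length_factor, length_factor] at hle
  omega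

theorem length_succ_le (h : IsStandardEpisturmian x u s) (n : ℕ) :
    (u (n + 1)).length ≤ 2 * (u n).length + 1 := by
  have := h.length_succ_le_of_reflect (n := n) le_rfl fun i h₁ h₂ => by
    rw [le_antisymm h₂ h₁, Nat.add_sub_cancel]
  omega

theorem length_one (h : IsStandardEpisturmian x u s) : (u 1).length = 1 := by
  have hle := h.length_succ_le 0
  have hlt := h.length_lt_succ 0
  rw [Nat.zero_add, h.length_zero] at hle hlt
  omega

-- If `x j = x n`, then `x n · u j · x n` is a palindromic suffix of `u n · x n`.
theorem length_succ_add_length_le (h : IsStandardEpisturmian x u s) {j n : ℕ} (hjn : j < n)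
    (hx : x j = x n) : (u (n + 1)).length + (u j).length ≤ 2 * (u n).length := by
  have hlt : (u j).length < (u n).length := h.strictMono_length hjn
  obtain ⟨q, hq⟩ := Nat.exists_eq_add_of_lt hlt
  have hsq : s q = x n := by
    rw [← hx, ← h.apply_length j, ← h.apply_reflect (n := n) (i := q) (by omega)]
    congr 1
    omega
  have := h.length_succ_le_of_reflect (n := n) (q := q) (by omega) fun i hqi hin => by
    rcases hin.eq_or_lt with rfl | hin
    · rw [Nat.add_sub_cancel_left, hsq, h.apply_length]
    rcases hqi.eq_or_lt with rfl | hqi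
    · rw [Nat.add_sub_cancel, hsq, h.apply_length]
    rw [← h.apply_reflect hin, ← h.apply_reflect (n := j) (i := (u n).length - 1 - i) (by omega),
      ← h.apply_reflect (n := n) (i := (u n).length + q - i) (by omega)]
    congr 1
    omega
  omega

theorem length_succ_add_length_le_of_const (h : IsStandardEpisturmian x u s) {n m : ℕ}
    (hnm : n ≤ m) (hx : ∀ i, n ≤ i → i ≤ m → x i = x n) :
    (u (m + 1)).length + (u n).length ≤ (u m).length + (u (n + 1)).length := by
  induction m, hnm using Nat.le_induction with
  | base => rw [Nat.add_comm]
  | succ m hm ih =>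
    have := ih fun i hi hi' => hx i hi (by omega)
    have := h.length_succ_add_length_le m.lt_add_one
      ((hx m hm (by omega)).trans (hx (m + 1) (by omega) le_rfl).symm)
    omega

theorem apply_ne_of_fresh (h : IsStandardEpisturmian x u s) {n : ℕ} {a : α}
    (ha : ∀ i < n, x i ≠ a) : ∀ i < (u n).length, s i ≠ a := by
  induction n with
  | zero => simp [h.zero]
  | succ n ih =>
    have ih := ih fun i hi => ha i (by omega)
    intro i hi
    rcases lt_trichotomy i (u n).length with hlt | rfl | hgt
    · exact ih i hlt
    · rw [h.apply_length]
      exact ha n n.lt_succ_self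
    · have := h.length_succ_le n
      rw [← h.apply_reflect hi]
      exact ih _ (by omega)

theorem length_add_one_lt_of_fresh (h : IsStandardEpisturmian x u s) {n : ℕ} (hn : 0 < n)
    (hfresh : ∀ i < n, x i ≠ x n) : (u n).length + 1 < (u (n + 1)).length := by
  have hpos : 0 < (u n).length := h.length_zero ▸ h.strictMono_length hn
  refine lt_of_le_of_ne (h.length_lt_succ n) fun heq => ?_
  have hper := h.apply_add_period (n := n) (i := (u n).length - 1) (by omega)
  rw [← heq, Nat.add_sub_cancel_left, Nat.sub_add_cancel hpos, h.apply_length] at hper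
  exact h.apply_ne_of_fresh hfresh _ (by omega) hper.symm

theorem occursEarlier (h : IsStandardEpisturmian x u s) {n N M : ℕ}
    (hN : (u (n + 1)).length ≤ N + (u n).length) (hM : M ≤ (u (n + 1)).length) :
    OccursEarlier s N M := by
  have hlt := h.length_lt_succ n
  refine ⟨N - ((u (n + 1)).length - (u n).length), by omega, fun t ht => ?_⟩
  rw [← h.apply_add_period (n := n) (by omega)]
  congr 1
  omega

theorem not_occursEarlier (h : IsStandardEpisturmian x u s) {n N : ℕ} (hx : x n ≠ x (n + 1))
    (hN : N ≤ (u n).length + 1) : ¬ OccursEarlier s N ((u (n + 1)).length + 1) := by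
  have hp := Nat.add_sub_of_le (h.length_lt_succ n).le
  have hbreak := not_occursEarlier_of_period_break (fun i hi => h.apply_add_period hi)
    (by rwa [hp, h.apply_length, h.apply_length])
  rw [hp] at hbreak
  exact fun hearly => hbreak (hearly.mono hN le_rfl)

-- Otherwise the palindrome `u (n + 2)` reflects the constant stretch, which contains
-- the non-recurring factor of `not_occursEarlier`, to an earlier position.
theorem not_const_after (h : IsStandardEpisturmian x u s) {n : ℕ} (hx : x n ≠ x (n + 1)) :
    ¬ ∀ j, (u n).length < j → j ≤ (u (n + 1)).length + 1 → s j = x (n + 1) := by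
  intro hconst
  have hlt := h.length_lt_succ n
  have hlt' : (u (n + 1)).length < (u (n + 2)).length := h.length_lt_succ (n + 1)
  have hclosure : (u (n + 2)).length ≤ (u (n + 1)).length + 1 + ((u n).length + 1) :=
    h.length_succ_le_of_reflect hlt fun i h₁ h₂ => by
      rw [hconst i h₁ (by omega), hconst _ (by omega) (by omega)]
  rcases (Nat.succ_le_of_lt hlt').eq_or_lt with hperiod | hgt
  · have hs : ∀ i ≤ (u (n + 1)).length, s i = s 0 := by
      intro i hi
      induction i with
      | zero => rfl
      | succ i ih =>
        have hper := h.apply_add_period (n := n + 1) hi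
        rw [← hperiod, Nat.succ_eq_add_one, Nat.add_sub_cancel_left] at hper
        rw [hper, ih (by omega)]
    exact hx (by rw [← h.apply_length, ← h.apply_length, hs _ le_rfl, hs _ hlt.le])
  · refine h.not_occursEarlier hx le_rfl
      ⟨(u (n + 2)).length - 2 - (u (n + 1)).length, by omega, fun t ht => ?_⟩
    rw [hconst ((u n).length + 1 + t) (by omega) (by omega),
      ← h.apply_reflect (n := n + 2) (by omega)]
    exact hconst _ (by omega) (by omega)

end IsStandardEpisturmian

end Episturmian

section Runs

variable {α : Type*} {s : ℕ → α}

/-- `y 0, y 1, …` are the letters of the successive maximal runs of equal letters in `x`, and the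
`k`-th run occupies the positions `g k ≤ n < g (k + 1)`. All indices start at `0`. -/
structure IsRunDecomposition (x y : ℕ → α) (g : ℕ → ℕ) : Prop where
  zero : g 0 = 0
  strictMono : StrictMono g
  apply_eq {k n : ℕ} : g k ≤ n → n < g (k + 1) → x n = y k
  ne_succ (k : ℕ) : y k ≠ y (k + 1)

variable {x y : ℕ → α} {u : ℕ → List α} {g : ℕ → ℕ}

namespace IsRunDecomposition

theorem apply_start (r : IsRunDecomposition x y g) (k : ℕ) : x (g k) = y k :=
  r.apply_eq le_rfl (r.strictMono k.lt_add_one)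

theorem exists_apply_eq_of_lt (r : IsRunDecomposition x y g) {k n : ℕ} (hn : n < g k) :
    ∃ i < k, x n = y i := by
  induction k with
  | zero => exact absurd hn (by simp [r.zero])
  | succ k ih =>
    rcases lt_or_ge n (g k) with hlt | hge
    · obtain ⟨i, hi, hx⟩ := ih hlt
      exact ⟨i, by omega, hx⟩
    · exact ⟨k, k.lt_succ_self, r.apply_eq hge hn⟩

theorem apply_ne_of_new [DecidableEq α] (r : IsRunDecomposition x y g) {k n : ℕ}
    (hk : y k ∉ (Finset.range k).image y) (hn : n < g k) : x n ≠ y k := by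
  obtain ⟨i, hi, hx⟩ := r.exists_apply_eq_of_lt hn
  exact fun heq => hk (Finset.mem_image.2 ⟨i, Finset.mem_range.2 hi, hx.symm.trans heq⟩)

theorem exists_last (r : IsRunDecomposition x y g) (k : ℕ) :
    ∃ e, g k ≤ e ∧ g (k + 1) = e + 1 ∧ x e = y k := by
  obtain ⟨d, hd⟩ := Nat.exists_eq_add_of_lt (r.strictMono k.lt_add_one)
  exact ⟨g k + d, by omega, hd, r.apply_eq (by omega) (by omega)⟩

end IsRunDecomposition

namespace IsStandardEpisturmian

theorem apply_length_start (h : IsStandardEpisturmian x u s) (r : IsRunDecomposition x y g)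
    (k : ℕ) : s (u (g k)).length = y k := by
  rw [h.apply_length, r.apply_start]

theorem length_start_le_length_last (h : IsStandardEpisturmian x u s)
    (r : IsRunDecomposition x y g) (k : ℕ) :
    (u (g k)).length ≤ (u (g (k + 1) - 1)).length :=
  h.strictMono_length.monotone (Nat.le_sub_one_of_lt (r.strictMono k.lt_add_one))

theorem length_start_succ_add_le (h : IsStandardEpisturmian x u s)
    (r : IsRunDecomposition x y g) (k : ℕ) :
    (u (g (k + 1))).length + (u (g k)).length ≤
      (u (g (k + 1) - 1)).length + (u (g k + 1)).length := by
  obtain ⟨e, hge, he, -⟩ := r.exists_last k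
  rw [he, Nat.add_sub_cancel]
  refine h.length_succ_add_length_le_of_const hge fun i hi hie => ?_
  rw [r.apply_eq hi (by omega), r.apply_start]

theorem length_start_add_one_lt_of_new [DecidableEq α] (h : IsStandardEpisturmian x u s)
    (r : IsRunDecomposition x y g) {k : ℕ} (hk : y k ∉ (Finset.range k).image y)
    (hg : g (k + 1) ≠ 1) : (u (g k)).length + 1 < (u (g (k + 1))).length := by
  rcases k.eq_zero_or_pos with rfl | hpos
  · rw [Nat.zero_add] at hg ⊢
    have hzero := r.zero
    have hpos : g 0 < g 1 := r.strictMono Nat.zero_lt_one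
    have hle : g 1 ≤ (u (g 1)).length := h.strictMono_length.le_apply
    rw [hzero, h.length_zero]
    omega
  · have hnew := h.length_add_one_lt_of_fresh (r.zero ▸ r.strictMono hpos)
      fun n hn => (r.apply_start k).symm ▸ r.apply_ne_of_new hk hn
    exact hnew.trans_le (h.strictMono_length.monotone (r.strictMono k.lt_add_one))

theorem occursEarlier_run (h : IsStandardEpisturmian x u s) (r : IsRunDecomposition x y g)
    {k N : ℕ} (hN : (u (g k + 1)).length ≤ N + (u (g k)).length) :
    OccursEarlier s N (u (g (k + 1))).length := by
  have hlast := h.length_start_succ_add_le r k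
  obtain ⟨e, -, he, -⟩ := r.exists_last k
  rw [he, Nat.add_sub_cancel] at hlast
  exact he ▸ h.occursEarlier (by omega) le_rfl

theorem not_occursEarlier_run (h : IsStandardEpisturmian x u s) (r : IsRunDecomposition x y g)
    {k N : ℕ} (hN : N ≤ (u (g (k + 1) - 1)).length + 1) :
    ¬ OccursEarlier s N ((u (g (k + 1))).length + 1) := by
  obtain ⟨e, -, he, hxe⟩ := r.exists_last k
  rw [he, Nat.add_sub_cancel] at hN
  exact he ▸ h.not_occursEarlier (by rw [hxe, ← he, r.apply_start]; exact r.ne_succ k) hN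

theorem not_const_after_last (h : IsStandardEpisturmian x u s) (r : IsRunDecomposition x y g)
    (k : ℕ) : ¬ ∀ j, (u (g (k + 1) - 1)).length < j → j ≤ (u (g (k + 1))).length + 1 →
      s j = y (k + 1) := by
  obtain ⟨e, -, he, hxe⟩ := r.exists_last k
  have hxe' : x (e + 1) = y (k + 1) := he ▸ r.apply_start (k + 1)
  rw [he, Nat.add_sub_cancel, ← hxe']
  exact h.not_const_after (by rw [hxe, hxe']; exact r.ne_succ k)

end IsStandardEpisturmian

variable [DecidableEq α]

namespace IsZFact

variable {z : ℕ → List α}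

theorem length_cat_one_le (hz : IsZFact s z) (h : IsStandardEpisturmian x u s)
    (r : IsRunDecomposition x y g) : (cat z 1).length ≤ (u (g 1 - 1)).length + 1 := by
  by_contra! hlong
  have hconst : ∀ j < (cat z 1).length, s j = s 0 := by
    rcases hz.occursEarlier_or_eq 0 with ⟨i, hi, -⟩ | hconst
    · exact absurd hi i.not_lt_zero
    · exact fun j => hconst j j.zero_le
  obtain ⟨e, -, he, hxe⟩ := r.exists_last 0
  have hlen := h.length_start_succ_add_le r 0
  have hlen_one := h.length_succ_le 0
  simp only [r.zero, h.length_zero, he, Nat.zero_add, Nat.add_sub_cancel] at hlen hlen_one hlong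
  refine r.ne_succ 0 ?_
  rw [← hxe, ← r.apply_start (0 + 1), he, ← h.apply_length, ← h.apply_length]
  exact (hconst _ (by omega)).trans (hconst _ (by omega)).symm

theorem length_cat_succ_eq (hz : IsZFact s z) (h : IsStandardEpisturmian x u s)
    (r : IsRunDecomposition x y g) {j k : ℕ} (hlower : (u (g k)).length < (cat z j).length)
    (hupper : (cat z j).length ≤ (u (g (k + 1) - 1)).length + 1) :
    (cat z (j + 1)).length = (u (g (k + 1))).length + 1 := by
  have hdouble := h.length_succ_le (g k)
  refine (hz.length_cat_succ (h.occursEarlier_run r (by omega))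
    (h.not_occursEarlier_run r hupper)).resolve_right fun ⟨_, hconst⟩ => ?_
  have hlast : (u (g (k + 1) - 1)).length < (u (g (k + 1))).length :=
    h.strictMono_length (Nat.sub_one_lt (Nat.ne_zero_of_lt (r.strictMono k.lt_add_one)))
  refine h.not_const_after_last r k fun i hi hi' => ?_
  rw [← h.apply_length_start r]
  exact (hconst i (by omega) (by omega)).trans (hconst _ (by omega) (by omega)).symm

theorem length_cat_add_two (hz : IsZFact s z) (h : IsStandardEpisturmian x u s)
    (r : IsRunDecomposition x y g) (k : ℕ) :
    (cat z (k + 2)).length = (u (g (k + 1))).length + 1 := by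
  induction k with
  | zero =>
    refine hz.length_cat_succ_eq h r ?_ (hz.length_cat_one_le h r)
    rw [r.zero, h.length_zero]
    exact length_cat_lt_succ (hz 1 le_rfl).1
  | succ k ih =>
    have := h.length_start_le_length_last r (k + 1)
    exact hz.length_cat_succ_eq h r (by omega) (by omega)

end IsZFact

namespace IsCFact

variable {c : ℕ → List α}

theorem length_cat_succ_eq (hc : IsCFact s c) (h : IsStandardEpisturmian x u s)
    (r : IsRunDecomposition x y g) {j k : ℕ}
    (hlower : (u (g k + 1)).length ≤ (cat c j).length + (u (g k)).length)
    (hupper : (cat c j).length ≤ (u (g k)).length + 1)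
    (hlt : (cat c j).length < (u (g (k + 1))).length) :
    (cat c (j + 1)).length = (u (g (k + 1))).length := by
  have := h.length_start_le_length_last r k
  exact hc.length_cat_succ hlt (h.occursEarlier_run r hlower)
    (h.not_occursEarlier_run r (by omega))

theorem length_cat_succ_of_recurring (hc : IsCFact s c) (h : IsStandardEpisturmian x u s)
    (r : IsRunDecomposition x y g) {j k : ℕ} (hj : (cat c j).length = (u (g k)).length)
    (hk : y k ∈ (Finset.range k).image y) :
    (cat c (j + 1)).length = (u (g (k + 1))).length := by
  obtain ⟨i, hi, hyi⟩ := Finset.mem_image.1 hk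
  have hle := h.length_succ_add_length_le (r.strictMono (Finset.mem_range.1 hi))
    (by rw [r.apply_start, r.apply_start, hyi])
  have hlt : (u (g k)).length < (u (g (k + 1))).length :=
    h.strictMono_length (r.strictMono k.lt_add_one)
  exact hc.length_cat_succ_eq h r (by omega) (by omega) (by omega)

theorem length_cat_succ_of_new (hc : IsCFact s c) (h : IsStandardEpisturmian x u s)
    (r : IsRunDecomposition x y g) {j k : ℕ} (hj : (cat c j).length = (u (g k)).length)
    (hk : y k ∉ (Finset.range k).image y) :
    (cat c (j + 1)).length = (u (g k)).length + 1 := by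
  rw [hc.length_cat_succ_of_fresh, hj]
  rw [hj, h.apply_length_start r]
  exact h.apply_ne_of_fresh fun n hn => r.apply_ne_of_new hk hn

theorem length_cat_add_two_of_new (hc : IsCFact s c) (h : IsStandardEpisturmian x u s)
    (r : IsRunDecomposition x y g) {j k : ℕ} (hj : (cat c j).length = (u (g k)).length)
    (hk : y k ∉ (Finset.range k).image y) (hg : g (k + 1) ≠ 1) :
    (cat c (j + 2)).length = (u (g (k + 1))).length := by
  have hfirst := hc.length_cat_succ_of_new h r hj hk
  have := h.length_start_add_one_lt_of_new r hk hg
  have := h.length_succ_le (g k)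
  exact hc.length_cat_succ_eq h r (by omega) (by omega) (by omega)

-- Each run ends a Crochemore factor, and a run whose letter is new starts with a factor of its
-- own, the fresh letter. The first run is nothing but its fresh letter if it has length `1`.
theorem length_cat_add_card (hc : IsCFact s c) (h : IsStandardEpisturmian x u s)
    (r : IsRunDecomposition x y g) (k : ℕ) :
    (cat c (k + ((Finset.range k).image y).card - if g 1 = 1 then 1 else 0)).length =
      (u (g k)).length := by
  induction k with
  | zero => simp [cat, r.zero, h.zero]
  | succ k ih =>
    rw [Finset.range_add_one, Finset.image_insert]
    by_cases hk : y k ∈ (Finset.range k).image y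
    · rw [Finset.insert_eq_of_mem hk, ← hc.length_cat_succ_of_recurring h r ih hk]
      have := Finset.card_pos.2 ⟨_, hk⟩
      congr 2
      split_ifs <;> omega
    rw [Finset.card_insert_of_notMem hk]
    by_cases hg : g (k + 1) = 1
    · obtain rfl : k = 0 := by
        have := r.strictMono.le_apply (x := k + 1)
        omega
      rw [Nat.zero_add] at hg
      simpa [hg, r.zero, h.length_zero, h.length_one] using hc.length_cat_succ_of_new h r ih hk
    · rw [← hc.length_cat_add_two_of_new h r ih hk hg]
      congr 2
      rcases k.eq_zero_or_pos with rfl | hpos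
      · simp [hg]
      · split_ifs <;> omega

end IsCFact

theorem cons_zFactor_eq_cFactor_append {z c : ℕ → List α} (h : IsStandardEpisturmian x u s)
    (r : IsRunDecomposition x y g) (hz : IsZFact s z) (hc : IsCFact s c) {k : ℕ}
    (hk : y k ∈ (Finset.range k).image y) :
    y k :: z (k + 2) =
      c (k + ((Finset.range k).image y).card - (if g 1 = 1 then 1 else 0) + 1) ++ [y (k + 1)] := by
  obtain ⟨k, rfl⟩ : ∃ k', k = k' + 1 :=
    Nat.exists_eq_succ_of_ne_zero (by rintro rfl; simp at hk)
  set ℓ := (u (g (k + 1))).length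
  obtain ⟨n, hn⟩ : ∃ n, (u (g (k + 2))).length = ℓ + n :=
    Nat.exists_eq_add_of_le (h.strictMono_length (r.strictMono (k + 1).lt_add_one)).le
  have hz_eq : z (k + 3) = factor s (ℓ + 1) n :=
    eq_factor_of_length_cat (hz.prefInf_append _) (hz.length_cat_add_two h r k)
      (by rw [hz.length_cat_add_two h r, hn, Nat.add_right_comm])
  have hj := hc.length_cat_add_card h r (k + 1)
  have hc_eq := eq_factor_of_length_cat (hc.prefInf_append _) hj
    ((hc.length_cat_succ_of_recurring h r hj hk).trans hn)
  rw [hz_eq, hc_eq, ← h.apply_length_start r (k + 1), ← h.apply_length_start r (k + 1 + 1), hn]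
  calc s ℓ :: factor s (ℓ + 1) n = factor s ℓ (1 + n) := (factor_add s ℓ 1 n).symm
    _ = factor s ℓ n ++ [s (ℓ + n)] := by rw [Nat.add_comm, factor_add, factor_one]

end Runs

section OneBased

variable {α : Type*}

theorem IsRunDecomposition.of_lengths {x y : ℕ → α} {d g : ℕ → ℕ}
    (hy : ∀ m : ℕ, 1 ≤ m → y m ≠ y (m + 1)) (hd : ∀ m : ℕ, 1 ≤ m → 0 < d m)
    (hg : ∀ m : ℕ, g m = (∑ i ∈ Finset.Icc 1 (m - 1), d i) + 1)
    (hx : ∀ m : ℕ, 1 ≤ m → ∀ n : ℕ, g m ≤ n → n < g (m + 1) → x n = y m) :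
    IsRunDecomposition (fun n => x (n + 1)) (fun k => y (k + 1)) (fun k => g (k + 1) - 1) where
  zero := by simp [hg]
  strictMono := strictMono_nat_of_lt_succ fun k => by
    simpa [hg, Finset.sum_Icc_succ_top] using hd (k + 1) k.succ_pos
  apply_eq {k n} h₁ h₂ := hx (k + 1) k.succ_pos (n + 1) (by omega) (by omega)
  ne_succ k := hy (k + 1) k.succ_pos

theorem exists_forall_image_Ico_eq_univ [DecidableEq α] [Fintype α] {y : ℕ → α}
    (hall : ∀ a : α, ∃ i : ℕ, 1 ≤ i ∧ y i = a) :
    ∃ K, ∀ k, K ≤ k → (Finset.Ico 1 k).image y = Finset.univ := by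
  choose f hf hyf using hall
  refine ⟨Finset.univ.sup f + 1, fun k hk => Finset.eq_univ_iff_forall.2 fun a => ?_⟩
  have hfa : f a ≤ Finset.univ.sup f := Finset.le_sup (Finset.mem_univ a)
  exact Finset.mem_image.2 ⟨f a, Finset.mem_Ico.2 ⟨hf a, by omega⟩, hyf a⟩

theorem z_c_relation_general [DecidableEq α] (x : ℕ → α) (u : ℕ → List α) (hu1 : u 1 = [])
    (hu : ∀ n : ℕ, 1 ≤ n → IsPalClosure (u n ++ [x n]) (u (n + 1))) (y : ℕ → α) (d g : ℕ → ℕ)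
    (hy : ∀ m : ℕ, 1 ≤ m → y m ≠ y (m + 1)) (hd : ∀ m : ℕ, 1 ≤ m → 0 < d m)
    (hg : ∀ m : ℕ, g m = (∑ i ∈ Finset.Icc 1 (m - 1), d i) + 1)
    (hx : ∀ m : ℕ, 1 ≤ m → ∀ n : ℕ, g m ≤ n → n < g (m + 1) → x n = y m)
    (s : ℕ → α) (hs : ∀ n : ℕ, 1 ≤ n → PrefInf (u n) s)
    (z c : ℕ → List α) (hz : IsZFact s z) (hc : IsCFact s c)
    {k : ℕ} (hk : y (k - 1) ∈ (Finset.Ico 1 (k - 1)).image y) :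
    y (k - 1) :: z k =
      c (k + ((Finset.Ico 1 (k - 1)).image y).card - 1 - (if d 1 = 1 then 1 else 0)) ++ [y k] := by
  have h : IsStandardEpisturmian (fun n => x (n + 1)) (fun n => u (n + 1)) s :=
    ⟨hu1, fun n => hu (n + 1) n.succ_pos, fun n => hs (n + 1) n.succ_pos⟩
  have r := IsRunDecomposition.of_lengths hy hd hg hx
  obtain ⟨k, rfl⟩ : ∃ k', k = k' + 2 := Nat.exists_eq_add_of_le' (by
    by_contra! hlt
    simp [Finset.Ico_eq_empty_of_le (show k - 1 ≤ 1 by omega)] at hk)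
  have himage : (Finset.Ico 1 (k + 1)).image y = (Finset.range k).image fun i => y (i + 1) := by
    rw [Finset.range_eq_Ico, ← Finset.image_add_right_Ico 0 k 1, Finset.image_image]
    rfl
  have hg1 : g 2 - 1 = 1 ↔ d 1 = 1 := by simp [hg]
  rw [show k + 2 - 1 = k + 1 from rfl, himage] at hk ⊢
  have hcard := Finset.card_pos.2 ⟨_, hk⟩
  convert cons_zFactor_eq_cFactor_append h r hz hc hk using 3
  simp only [Nat.reduceAdd, hg1]
  split_ifs <;> omega

end OneBased

theorem z_c_relation [Fintype A] (x : ℕ → A) (u : ℕ → List A) (hu1 : u 1 = [])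
    (hu : ∀ n : ℕ, 1 ≤ n → IsPalClosure (u n ++ [x n]) (u (n + 1))) (y : ℕ → A) (d : ℕ → ℕ) (g : ℕ → ℕ)
    (hy : ∀ m : ℕ, 1 ≤ m → y m ≠ y (m + 1)) (hd : ∀ m : ℕ, 1 ≤ m → 0 < d m)
    (hg : ∀ m : ℕ, g m = (∑ i ∈ Finset.Icc 1 (m - 1), d i) + 1)
    (hx : ∀ m : ℕ, 1 ≤ m → ∀ n : ℕ, g m ≤ n → n < g (m + 1) → x n = y m) (s : ℕ → A) (hs : ∀ n : ℕ, 1 ≤ n → PrefInf (u n) s)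
    (hall : ∀ a : A, ∃ i : ℕ, 1 ≤ i ∧ y i = a)
    (z c : ℕ → List A) (hz : IsZFact s z) (hc : IsCFact s c) :
    ∃ K : ℕ, ∀ k : ℕ, K ≤ k →
      y (k - 1) :: z k =
        c (k + Fintype.card A - 1 - (if d 1 = 1 then 1 else 0)) ++ [y k] := by
  obtain ⟨K, hK⟩ := exists_forall_image_Ico_eq_univ hall
  refine ⟨K + 1, fun k hk => ?_⟩
  simpa [hK (k - 1) (by omega)] using
    z_c_relation_general x u hu1 hu y d g hy hd hg hx s hs z c hz hc (k := k)
end
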